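/- arXiv:2301.00700 — 2 statements merged into one kernel-verified Lean document; each statement's English description precedes it below -/
import Mathlib

section
/- Let M₁ be an NFA over α with state type σ₁ and M₂ an NFA over α with state type σ₂ such that M₂.start = ∅ and M₂.accept = ∅. Define the disjoint-union NFA N over α with state type σ₁ ⊕ σ₂ by N.step (Sum.inl q) a = Sum.inl '' (M₁.step q a), N.step (Sum.inr q) a = Sum.inr '' (M₂.step q a), N.start = Sum.inl '' M₁.start, and N.accept = Sum.inl '' M₁.accept. Then N.accepts = M₁.accepts, while traceLang N = traceLang M₁ ∪ traceLang M₂. -/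
/-- The trace language of an NFA: the set of words read along some cycle. -/
def traceLang {α σ : Type*} (M : NFA α σ) : Set (List α) :=
  {ω : List α | ∃ q : σ, q ∈ M.evalFrom {q} ω}

/-!
A map `f` of state spaces with `N.step (f q) a = f '' M.step q a` has an image that no run of `N`
can leave, and evaluation commutes with `f '' ·`. Runs from initial states of `N` therefore stay in
the copy of `M₁`, so the copy of `M₂` cannot affect acceptance; a cycle, however, may start at any
state, and lies entirely within one of the two copies.
-/

section StepImage

variable {α σ τ : Type*} {M : NFA α σ} {N : NFA α τ} {f : σ → τ}

theorem stepSet_image (hstep : ∀ q a, N.step (f q) a = f '' M.step q a) (S : Set σ) (a : α) :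
    N.stepSet (f '' S) a = f '' M.stepSet S a := by
  simp only [NFA.stepSet, Set.biUnion_image, hstep, Set.image_iUnion]

theorem evalFrom_image (hstep : ∀ q a, N.step (f q) a = f '' M.step q a) (S : Set σ)
    (x : List α) : N.evalFrom (f '' S) x = f '' M.evalFrom S x := by
  induction x generalizing S with
  | nil => rfl
  | cons a x ih => rw [NFA.evalFrom_cons, NFA.evalFrom_cons, stepSet_image hstep, ih]

theorem accepts_eq_of_step_image (hstep : ∀ q a, N.step (f q) a = f '' M.step q a)
    (hstart : N.start = f '' M.start) (haccept : f ⁻¹' N.accept = M.accept) :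
    N.accepts = M.accepts := by
  ext x
  calc
    x ∈ N.accepts ↔ (N.accept ∩ f '' M.evalFrom M.start x).Nonempty := by
      rw [NFA.mem_accepts, hstart, evalFrom_image hstep]; rfl
    _ ↔ (f ⁻¹' N.accept ∩ M.evalFrom M.start x).Nonempty := by
      rw [Set.inter_comm, Set.image_inter_nonempty_iff, Set.inter_comm]
    _ ↔ x ∈ M.accepts := by
      rw [haccept]; rfl

theorem apply_mem_evalFrom_singleton_iff (hf : f.Injective)
    (hstep : ∀ q a, N.step (f q) a = f '' M.step q a) (p q : σ) (x : List α) :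
    f p ∈ N.evalFrom {f q} x ↔ p ∈ M.evalFrom {q} x := by
  rw [← Set.image_singleton, evalFrom_image hstep, hf.mem_set_image]

end StepImage

section Cover

variable {α σ₁ σ₂ τ : Type*} {M₁ : NFA α σ₁} {M₂ : NFA α σ₂} {N : NFA α τ}
  {f : σ₁ → τ} {g : σ₂ → τ}

theorem traceLang_eq_union_of_range_union_eq_univ (hf : f.Injective) (hg : g.Injective)
    (hcover : Set.range f ∪ Set.range g = Set.univ)
    (hstep₁ : ∀ q a, N.step (f q) a = f '' M₁.step q a)
    (hstep₂ : ∀ q a, N.step (g q) a = g '' M₂.step q a) :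
    traceLang N = traceLang M₁ ∪ traceLang M₂ := by
  have cycle₁ q x := apply_mem_evalFrom_singleton_iff hf hstep₁ q q x
  have cycle₂ q x := apply_mem_evalFrom_singleton_iff hg hstep₂ q q x
  ext x
  constructor
  · rintro ⟨t, ht⟩
    obtain ⟨q, rfl⟩ | ⟨q, rfl⟩ : t ∈ Set.range f ∪ Set.range g := hcover ▸ Set.mem_univ t
    · exact Or.inl ⟨q, (cycle₁ q x).1 ht⟩
    · exact Or.inr ⟨q, (cycle₂ q x).1 ht⟩
  · rintro (⟨q, hq⟩ | ⟨q, hq⟩)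
    · exact ⟨f q, (cycle₁ q x).2 hq⟩
    · exact ⟨g q, (cycle₂ q x).2 hq⟩

theorem disjUnion_accepts_and_traceLang_general (hf : f.Injective) (hg : g.Injective)
    (hcover : Set.range f ∪ Set.range g = Set.univ)
    (hstep₁ : ∀ q a, N.step (f q) a = f '' M₁.step q a)
    (hstep₂ : ∀ q a, N.step (g q) a = g '' M₂.step q a)
    (hstart : N.start = f '' M₁.start) (haccept : f ⁻¹' N.accept = M₁.accept) :
    N.accepts = M₁.accepts ∧ traceLang N = traceLang M₁ ∪ traceLang M₂ :=
  ⟨accepts_eq_of_step_image hstep₁ hstart haccept,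
    traceLang_eq_union_of_range_union_eq_univ hf hg hcover hstep₁ hstep₂⟩

end Cover

/-- Disjoint union of an NFA `M₁` with an NFA `M₂` having no initial and no
accepting states: the accepted language is that of `M₁`, while the trace
language is the union of the two trace languages. -/
theorem disjUnion_accepts_and_traceLang {α σ₁ σ₂ : Type*}
    (M₁ : NFA α σ₁) (M₂ : NFA α σ₂)
    (h2start : M₂.start = ∅) (h2accept : M₂.accept = ∅)
    (N : NFA α (σ₁ ⊕ σ₂))
    (hstep₁ : ∀ (q : σ₁) (a : α), N.step (Sum.inl q) a = Sum.inl '' M₁.step q a)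
    (hstep₂ : ∀ (q : σ₂) (a : α), N.step (Sum.inr q) a = Sum.inr '' M₂.step q a)
    (hstart : N.start = Sum.inl '' M₁.start)
    (haccept : N.accept = Sum.inl '' M₁.accept) :
    N.accepts = M₁.accepts ∧ traceLang N = traceLang M₁ ∪ traceLang M₂ :=
  disjUnion_accepts_and_traceLang_general Sum.inl_injective Sum.inr_injective
    Set.range_inl_union_range_inr hstep₁ hstep₂ hstart
    (haccept ▸ Set.preimage_image_eq _ Sum.inl_injective)
end

section
/- Let M be an NFA over α with state type σ and M' an NFA over α with state type σ', and let p : σ' → σ be a surjective map such that: (i) for all q' : σ', q' ∈ M'.start ↔ p q' ∈ M.start; (ii) for all q' : σ', q' ∈ M'.accept ↔ p q' ∈ M.accept; (iii) for all q' : σ' and a : α, p '' (M'.step q' a) = M.step (p q') a. Then traceLang M' ⊆ traceLang M: the trace language of a weak covering automaton is contained in the trace language of the base automaton. -/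
section MapsTo

open Set

variable {α σ σ' : Type*} {M : NFA α σ} {M' : NFA α σ'} {p : σ' → σ}

theorem mapsTo_stepSet {a : α} (hstep : ∀ q', MapsTo p (M'.step q' a) (M.step (p q') a))
    {S : Set σ'} {T : Set σ} (hST : MapsTo p S T) :
    MapsTo p (M'.stepSet S a) (M.stepSet T a) := by
  intro r' hr'
  obtain ⟨q', hq', hqr⟩ := NFA.mem_stepSet.mp hr'
  exact NFA.mem_stepSet.mpr ⟨p q', hST hq', hstep q' hqr⟩

theorem mapsTo_evalFrom (hstep : ∀ q' a, MapsTo p (M'.step q' a) (M.step (p q') a))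
    {S : Set σ'} {T : Set σ} (hST : MapsTo p S T) (ω : List α) :
    MapsTo p (M'.evalFrom S ω) (M.evalFrom T ω) := by
  induction ω generalizing S T with
  | nil => exact hST
  | cons a ω ih =>
    rw [NFA.evalFrom_cons, NFA.evalFrom_cons]
    exact ih (mapsTo_stepSet (hstep · a) hST)

theorem weakCovering_traceLang_subset_general
    (hstep : ∀ q' a, MapsTo p (M'.step q' a) (M.step (p q') a)) :
    traceLang M' ⊆ traceLang M := by
  rintro ω ⟨q', hcycle⟩
  have hbase : MapsTo p {q'} {p q'} := mapsTo_singleton.mpr rfl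
  exact ⟨p q', mapsTo_evalFrom hstep hbase ω hcycle⟩

end MapsTo

/-- The trace language of a weak covering automaton is contained in the trace
language of the base automaton. -/
theorem weakCovering_traceLang_subset {α σ σ' : Type*}
    (M : NFA α σ) (M' : NFA α σ') (p : σ' → σ) (hp : Function.Surjective p)
    (hstart : ∀ q' : σ', q' ∈ M'.start ↔ p q' ∈ M.start)
    (haccept : ∀ q' : σ', q' ∈ M'.accept ↔ p q' ∈ M.accept)
    (hstep : ∀ (q' : σ') (a : α), p '' (M'.step q' a) = M.step (p q') a) :
    traceLang M' ⊆ traceLang M :=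
  weakCovering_traceLang_subset_general fun q' a ↦
    Set.mapsTo_iff_image_subset.mpr (hstep q' a).subset
end
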